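/- arXiv:2302.11145 — 7 statements merged into one kernel-verified Lean document; each statement's English description precedes it below -/
import Mathlib

section
/- Let g be a Lie-Yamaguti algebra over a field of characteristic 0, V a vector space, ρ: g → End(V) a linear map and μ: g×g → End(V) a bilinear map. Then (V;ρ,μ) is a representation of g if and only if the direct sum g ⊕ V becomes a Lie-Yamaguti algebra under the brackets [x+u,y+v] := [x,y]+ρ(x)v−ρ(y)u and ⟦x+u,y+v,z+w⟧ := ⟦x,y,z⟧+D(x,y)w+μ(y,z)u−μ(x,z)v for x,y,z in g and u,v,w in V, where D(x,y) := μ(y,x)−μ(x,y)+ρ(x)ρ(y)−ρ(y)ρ(x)−ρ([x,y]). -/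
/-!
All the brackets on `g × V` are multilinear and vanish once two arguments lie in `V`, so each
Lie-Yamaguti axiom on `g × V` amounts to the axiom on `g` together with the identities obtained by
placing exactly one argument in `V`.

* Axiom `ly1` with one argument in `V` is the definition of `D`, and the skew-symmetry of the
  ternary bracket is that of `D`.
* Axiom `ly2` gives `r1` when one of the first three arguments is in `V`, and the cyclic identity
  `D([x,y],z) + D([y,z],x) + D([z,x],y) = 0` when the last one is.
* Axiom `ly3` gives `r2` or `r3`.
* Axiom `ly4` gives `r4` (first or second argument), `r5` (third or fourth argument), and
  `[D(x,y), D(z,w)] = D(⟦x,y,z⟧,w) + D(z,⟦x,y,w⟧)` (last argument).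

The two identities on `D` that are not part of the definition of a representation follow from it.
The cyclic one (`LYD_cyclic`) comes from applying `ρ` to `ly1` and rewriting with `r3`, `r1`, `r2`.
The commutator one (`LYD_derivation`) holds because `D(z,w)` is a polynomial in `ρ`, `μ` and the
bracket, on each of which `D(x,y)` acts as a derivation by `r3`, `r5` and `ly3`.
-/

/- Common definitions: Lie-Yamaguti algebras, representations, pre-Lie-Yamaguti algebras,
   product/complex/symplectic structures, etc. -/

section LYDefs

variable (k : Type*) [Field k]

/-- A bilinear map, given as a plain function. -/
structure IsBilinMap {M N P : Type*} [AddCommGroup M] [Module k M] [AddCommGroup N] [Module k N]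
    [AddCommGroup P] [Module k P] (f : M → N → P) : Prop where
  add₁ : ∀ (x y : M) (z : N), f (x + y) z = f x z + f y z
  smul₁ : ∀ (c : k) (x : M) (z : N), f (c • x) z = c • f x z
  add₂ : ∀ (x : M) (y z : N), f x (y + z) = f x y + f x z
  smul₂ : ∀ (c : k) (x : M) (y : N), f x (c • y) = c • f x y

/-- A trilinear map, given as a plain function. -/
structure IsTrilinMap {M N P Q : Type*} [AddCommGroup M] [Module k M] [AddCommGroup N] [Module k N]
    [AddCommGroup P] [Module k P] [AddCommGroup Q] [Module k Q] (f : M → N → P → Q) : Prop where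
  add₁ : ∀ (x y : M) (z : N) (w : P), f (x + y) z w = f x z w + f y z w
  smul₁ : ∀ (c : k) (x : M) (z : N) (w : P), f (c • x) z w = c • f x z w
  add₂ : ∀ (x : M) (y z : N) (w : P), f x (y + z) w = f x y w + f x z w
  smul₂ : ∀ (c : k) (x : M) (y : N) (w : P), f x (c • y) w = c • f x y w
  add₃ : ∀ (x : M) (y : N) (z w : P), f x y (z + w) = f x y z + f x y w
  smul₃ : ∀ (c : k) (x : M) (y : N) (z : P), f x y (c • z) = c • f x y z

variable {k}

theorem IsBilinMap.right {M N P : Type*} [AddCommGroup M] [Module k M] [AddCommGroup N]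
    [Module k N] [AddCommGroup P] [Module k P] {f : M → N → P} (h : IsBilinMap k f) (x : M) :
    IsLinearMap k (f x) :=
  ⟨h.add₂ x, fun c y => h.smul₂ c x y⟩

theorem IsTrilinMap.first {M N P Q : Type*} [AddCommGroup M] [Module k M] [AddCommGroup N]
    [Module k N] [AddCommGroup P] [Module k P] [AddCommGroup Q] [Module k Q]
    {f : M → N → P → Q} (h : IsTrilinMap k f) (y : N) (z : P) :
    IsLinearMap k (fun x => f x y z) :=
  ⟨fun a b => h.add₁ a b y z, fun c a => h.smul₁ c a y z⟩

theorem IsTrilinMap.third {M N P Q : Type*} [AddCommGroup M] [Module k M] [AddCommGroup N]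
    [Module k N] [AddCommGroup P] [Module k P] [AddCommGroup Q] [Module k Q]
    {f : M → N → P → Q} (h : IsTrilinMap k f) (x : M) (y : N) :
    IsLinearMap k (f x y) :=
  ⟨h.add₃ x y, fun c z => h.smul₃ c x y z⟩

variable (k)

/-- A Lie-Yamaguti algebra structure, given by a binary bracket `b` and a ternary bracket `t`. -/
structure IsLieYamaguti {g : Type*} [AddCommGroup g] [Module k g]
    (b : g → g → g) (t : g → g → g → g) : Prop where
  bilin : IsBilinMap k b
  trilin : IsTrilinMap k t
  skew_b : ∀ x y, b x y = -b y x
  skew_t : ∀ x y z, t x y z = -t y x z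
  ly1 : ∀ x y z, b (b x y) z + b (b y z) x + b (b z x) y + t x y z + t y z x + t z x y = 0
  ly2 : ∀ x y z w, t (b x y) z w + t (b y z) x w + t (b z x) y w = 0
  ly3 : ∀ x y z w, t x y (b z w) = b (t x y z) w + b z (t x y w)
  ly4 : ∀ x y z w u, t x y (t z w u) = t (t x y z) w u + t z (t x y w) u + t z w (t x y u)

variable {k}

/-- The operator `D(x,y) = μ(y,x) - μ(x,y) + ρ(x)ρ(y) - ρ(y)ρ(x) - ρ([x,y])` of a
representation `(ρ, μ)`. -/
def LYD {g V : Type*} [AddCommGroup V] (b : g → g → g) (ρ : g → V → V) (μ : g → g → V → V)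
    (x y : g) (v : V) : V :=
  μ y x v - μ x y v + ρ x (ρ y v) - ρ y (ρ x v) - ρ (b x y) v

variable (k)

/-- A representation `(ρ, μ)` of a Lie-Yamaguti algebra `(g, b, t)` on `V`. -/
structure IsLYRep {g V : Type*} [AddCommGroup g] [Module k g] [AddCommGroup V] [Module k V]
    (b : g → g → g) (t : g → g → g → g) (ρ : g → V → V) (μ : g → g → V → V) : Prop where
  lin : IsBilinMap k ρ
  bilin : IsTrilinMap k μ
  r1 : ∀ x y z v, μ (b x y) z v - μ x z (ρ y v) + μ y z (ρ x v) = 0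
  r2 : ∀ x y z v, μ x (b y z) v - ρ y (μ x z v) + ρ z (μ x y v) = 0
  r3 : ∀ x y z v, ρ (t x y z) v = LYD b ρ μ x y (ρ z v) - ρ z (LYD b ρ μ x y v)
  r4 : ∀ x y z w v,
    μ z w (μ x y v) - μ y w (μ x z v) - μ x (t y z w) v + LYD b ρ μ y z (μ x w v) = 0
  r5 : ∀ x y z w v, μ (t x y z) w v + μ z (t x y w) v
    = LYD b ρ μ x y (μ z w v) - μ z w (LYD b ρ μ x y v)

variable {k}

/-- The binary bracket of the semidirect product Lie-Yamaguti algebra `g ⋉ V`. -/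
def sdB {g V : Type*} [AddCommGroup V] (b : g → g → g) (ρ : g → V → V)
    (p q : g × V) : g × V :=
  (b p.1 q.1, ρ p.1 q.2 - ρ q.1 p.2)

/-- The ternary bracket of the semidirect product Lie-Yamaguti algebra `g ⋉ V`. -/
def sdT {g V : Type*} [AddCommGroup V] (b : g → g → g) (t : g → g → g → g)
    (ρ : g → V → V) (μ : g → g → V → V) (p q r : g × V) : g × V :=
  (t p.1 q.1 r.1, LYD b ρ μ p.1 q.1 r.2 + μ q.1 r.1 p.2 - μ p.1 r.1 q.2)

/-- The associator of a bilinear product. -/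
def preAssoc {A : Type*} [AddCommGroup A] (m : A → A → A) (x y z : A) : A :=
  m (m x y) z - m x (m y z)

/-- The bracket `{x,y,z}_D = {z,y,x} - {z,x,y} + (y,x,z) - (x,y,z)` of a
pre-Lie-Yamaguti algebra. -/
def preD {A : Type*} [AddCommGroup A] (m : A → A → A) (t : A → A → A → A) (x y z : A) : A :=
  t z y x - t z x y + preAssoc m y x z - preAssoc m x y z

variable (k)

/-- A pre-Lie-Yamaguti algebra structure `(*, {·,·,·})` on `A`. -/
structure IsPreLieYamaguti {A : Type*} [AddCommGroup A] [Module k A]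
    (m : A → A → A) (t : A → A → A → A) : Prop where
  bilin : IsBilinMap k m
  trilin : IsTrilinMap k t
  p1 : ∀ x y z w, t z (m x y - m y x) w - t (m y z) x w + t (m x z) y w = 0
  p2 : ∀ x y z w, t x y (m z w - m w z) = m z (t x y w) - m w (t x y z)
  p3 : ∀ x y z w u, t (t x y z) w u - t (t x y w) z u - t x y (preD m t z w u)
        - t x y (t z w u) + t x y (t w z u) + preD m t z w (t x y u) = 0
  p4 : ∀ x y z w u, t z (preD m t x y w) u + t z (t x y w) u - t z (t y x w) u
        + t z w (preD m t x y u) + t z w (t x y u) - t z w (t y x u)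
        = preD m t x y (t z w u) - t (preD m t x y z) w u
  p5 : ∀ x y z w, m (preD m t x y z) w + m (t x y z) w - m (t y x z) w
        = preD m t x y (m z w) - m z (preD m t x y w)

variable {k}

/-- The binary bracket `[x,y]_C = x*y - y*x` of the sub-adjacent Lie-Yamaguti algebra. -/
def subAdjB {A : Type*} [AddCommGroup A] (m : A → A → A) (x y : A) : A := m x y - m y x

/-- The ternary bracket `⟦x,y,z⟧_C = {x,y,z}_D + {x,y,z} - {y,x,z}` of the sub-adjacent
Lie-Yamaguti algebra. -/
def subAdjT {A : Type*} [AddCommGroup A] (m : A → A → A) (t : A → A → A → A) (x y z : A) : A :=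
  preD m t x y z + t x y z - t y x z

/-- A relative Rota-Baxter operator `T : V → g` on a Lie-Yamaguti algebra with respect to a
representation `(ρ, μ)`. -/
def IsRelRotaBaxter {g V : Type*} [AddCommGroup g] [AddCommGroup V]
    (b : g → g → g) (t : g → g → g → g) (ρ : g → V → V) (μ : g → g → V → V) (T : V → g) : Prop :=
  (∀ u v, b (T u) (T v) = T (ρ (T u) v - ρ (T v) u)) ∧
  (∀ u v w, t (T u) (T v) (T w)
    = T (LYD b ρ μ (T u) (T v) w + μ (T v) (T w) u - μ (T u) (T w) v))

/-- The map `L*` of the dual representation of the representation `(L, R)` of the sub-adjacent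
Lie-Yamaguti algebra of a pre-Lie-Yamaguti algebra:  `⟨L*(x)α, v⟩ = -⟨α, x*v⟩`. -/
def dualRho {g : Type*} [AddCommGroup g] [Module k g] {m : g → g → g}
    (h : IsBilinMap k m) (x : g) (α : Module.Dual k g) : Module.Dual k g :=
  -(α.comp (IsLinearMap.mk' (m x) (h.right x)))

/-- The map `-R*τ` of the dual representation of the representation `(L, R)` of the sub-adjacent
Lie-Yamaguti algebra of a pre-Lie-Yamaguti algebra:  `⟨(-R*τ)(x,y)α, v⟩ = ⟨α, {v,y,x}⟩`. -/
def dualMu {g : Type*} [AddCommGroup g] [Module k g] {t : g → g → g → g}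
    (h : IsTrilinMap k t) (x y : g) (α : Module.Dual k g) : Module.Dual k g :=
  α.comp (IsLinearMap.mk' (fun v => t v y x) (h.first y x))

/-- The isomorphism `B^♯ : g → g*`, `⟨B^♯(x), y⟩ = B(x,y)`, induced by a bilinear form `B`. -/
def bsharp {g : Type*} [AddCommGroup g] [Module k g] {B : g → g → k}
    (hB : IsBilinMap k B) (x : g) : Module.Dual k g :=
  IsLinearMap.mk' (B x) (hB.right x)

variable (k)

/-- A product structure on a Lie-Yamaguti algebra: a linear involution `E ≠ ± id` satisfying
the integrability conditions. -/
structure IsProductStructure {g : Type*} [AddCommGroup g] [Module k g]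
    (b : g → g → g) (t : g → g → g → g) (E : g → g) : Prop where
  lin : IsLinearMap k E
  invol : ∀ x, E (E x) = x
  ne_id : E ≠ id
  ne_neg_id : E ≠ fun x => -x
  integ_b : ∀ x y, b (E x) (E y) = E (b (E x) y) + E (b x (E y)) - b x y
  integ_t : ∀ x y z, t (E x) (E y) (E z) =
      E (t (E x) (E y) z) + E (t x (E y) (E z)) + E (t (E x) y (E z))
      - t (E x) y z - t x (E y) z - t x y (E z) + E (t x y z)

variable {k}

/-- The eigenspace of a linear map `E` for the eigenvalue `c`. -/
def eigenspaceOf {g : Type*} [AddCommGroup g] [Module k g] {E : g → g}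
    (hE : IsLinearMap k E) (c : k) : Submodule k g :=
  LinearMap.ker (IsLinearMap.mk' E hE - c • LinearMap.id)

variable (k)

/-- A paracomplex structure: a product structure whose `±1`-eigenspaces have the same
dimension. -/
structure IsParacomplex {g : Type*} [AddCommGroup g] [Module k g]
    (b : g → g → g) (t : g → g → g → g) (E : g → g) : Prop where
  prod : IsProductStructure k b t E
  dim_eq : Module.finrank k (eigenspaceOf prod.lin 1)
    = Module.finrank k (eigenspaceOf prod.lin (-1))

variable {k}

/-- `E` is perfect: it commutes with both brackets. -/
def IsPerfectMap {g : Type*} (b : g → g → g) (t : g → g → g → g) (E : g → g) : Prop :=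
  (∀ x y, E (b x y) = b (E x) (E y)) ∧ (∀ x y z, E (t x y z) = t (E x) (E y) (E z))

variable (k)

/-- A complex structure on a (real) Lie-Yamaguti algebra. -/
structure IsComplexStructure {g : Type*} [AddCommGroup g] [Module k g]
    (b : g → g → g) (t : g → g → g → g) (J : g → g) : Prop where
  lin : IsLinearMap k J
  invol : ∀ x, J (J x) = -x
  integ_b : ∀ x y, b (J x) (J y) = J (b (J x) y) + J (b x (J y)) + b x y
  integ_t : ∀ x y z, J (t x y z) =
      -t (J x) (J y) (J z) + t (J x) y z + t x (J y) z + t x y (J z)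
      + J (t (J x) (J y) z) + J (t (J x) y (J z)) + J (t x (J y) (J z))

/-- A complex product structure `(J, E)`: a complex structure `J` and a product structure `E`
which anticommute. -/
def IsComplexProductStructure {g : Type*} [AddCommGroup g] [Module k g]
    (b : g → g → g) (t : g → g → g → g) (J E : g → g) : Prop :=
  IsComplexStructure k b t J ∧ IsProductStructure k b t E ∧ ∀ x, E (J x) = -J (E x)

/-- A perfect complex product structure. -/
def IsPerfectComplexProductStructure {g : Type*} [AddCommGroup g] [Module k g]
    (b : g → g → g) (t : g → g → g → g) (J E : g → g) : Prop :=
  IsComplexProductStructure k b t J E ∧ IsPerfectMap b t E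

/-- A symplectic structure on a Lie-Yamaguti algebra. -/
structure IsSymplectic {g : Type*} [AddCommGroup g] [Module k g]
    (b : g → g → g) (t : g → g → g → g) (ω : g → g → k) : Prop where
  bilin : IsBilinMap k ω
  skew : ∀ x y, ω x y = -ω y x
  nondeg : ∀ x, (∀ y, ω x y = 0) → x = 0
  c1 : ∀ x y z, ω x (b y z) + ω y (b z x) + ω z (b x y) = 0
  c2 : ∀ x y z w, ω z (t x y w) - ω x (t w z y) + ω y (t w z x) - ω w (t x y z) = 0

/-- A para-Kähler structure `(ω, E)` on a Lie-Yamaguti algebra. -/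
def IsParaKahler {g : Type*} [AddCommGroup g] [Module k g]
    (b : g → g → g) (t : g → g → g → g) (ω : g → g → k) (E : g → g) : Prop :=
  IsSymplectic k b t ω ∧ IsParacomplex k b t E ∧ ∀ x y, ω (E x) (E y) = -ω x y

/-- A pseudo-Kähler structure `(ω, J)` on a (real) Lie-Yamaguti algebra. -/
def IsPseudoKahler {g : Type*} [AddCommGroup g] [Module k g]
    (b : g → g → g) (t : g → g → g → g) (ω : g → g → k) (J : g → g) : Prop :=
  IsSymplectic k b t ω ∧ IsComplexStructure k b t J ∧ ∀ x y, ω (J x) (J y) = ω x y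

variable {k}

/-- `E` is abelian: the two brackets vanish on each eigenspace of `E` (equational
characterization). -/
def IsAbelianProduct {g : Type*} [AddCommGroup g] (b : g → g → g) (t : g → g → g → g)
    (E : g → g) : Prop :=
  (∀ x y, b (E x) y = -b x (E y)) ∧
  (∀ x y z, t (E x) y z + t x (E y) z + t x y (E z) + t (E x) (E y) (E z) = 0)

end LYDefs

section Helpers

variable {k : Type*} [Field k]

namespace IsBilinMap

variable {M N P : Type*} [AddCommGroup M] [Module k M] [AddCommGroup N] [Module k N]
  [AddCommGroup P] [Module k P] {f : M → N → P}

theorem zero₁ (h : IsBilinMap k f) (z : N) : f 0 z = 0 := by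
  simpa using h.smul₁ 0 0 z

theorem zero₂ (h : IsBilinMap k f) (x : M) : f x 0 = 0 := by
  simpa using h.smul₂ 0 x 0

theorem neg₁ (h : IsBilinMap k f) (x : M) (z : N) : f (-x) z = -f x z := by
  simpa using h.smul₁ (-1) x z

theorem neg₂ (h : IsBilinMap k f) (x : M) (z : N) : f x (-z) = -f x z := by
  simpa using h.smul₂ (-1) x z

theorem sub₂ (h : IsBilinMap k f) (x : M) (y z : N) : f x (y - z) = f x y - f x z := by
  rw [sub_eq_add_neg, h.add₂, h.neg₂, ← sub_eq_add_neg]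

end IsBilinMap

namespace IsTrilinMap

variable {M N P Q : Type*} [AddCommGroup M] [Module k M] [AddCommGroup N] [Module k N]
  [AddCommGroup P] [Module k P] [AddCommGroup Q] [Module k Q] {f : M → N → P → Q}

theorem zero₁ (h : IsTrilinMap k f) (y : N) (z : P) : f 0 y z = 0 := by
  simpa using h.smul₁ 0 0 y z

theorem zero₂ (h : IsTrilinMap k f) (x : M) (z : P) : f x 0 z = 0 := by
  simpa using h.smul₂ 0 x 0 z

theorem zero₃ (h : IsTrilinMap k f) (x : M) (y : N) : f x y 0 = 0 := by
  simpa using h.smul₃ 0 x y 0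

theorem neg₃ (h : IsTrilinMap k f) (x : M) (y : N) (z : P) : f x y (-z) = -f x y z := by
  simpa using h.smul₃ (-1) x y z

theorem sub₃ (h : IsTrilinMap k f) (x : M) (y : N) (z w : P) :
    f x y (z - w) = f x y z - f x y w := by
  rw [sub_eq_add_neg, h.add₃, h.neg₃, ← sub_eq_add_neg]

end IsTrilinMap

variable {g V : Type*} [AddCommGroup g] [Module k g] [AddCommGroup V] [Module k V]
  {b : g → g → g} {t : g → g → g → g} {ρ : g → V → V} {μ : g → g → V → V}

theorem LYD_trilin (hb : IsBilinMap k b) (hρ : IsBilinMap k ρ) (hμ : IsTrilinMap k μ) :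
    IsTrilinMap k (LYD b ρ μ) where
  add₁ x y z w := by
    simp only [LYD, hb.add₁, hρ.add₁, hρ.add₂, hμ.add₁, hμ.add₂]; abel
  smul₁ c x z w := by
    simp only [LYD, hb.smul₁, hρ.smul₁, hρ.smul₂, hμ.smul₁, hμ.smul₂, smul_sub, smul_add]
  add₂ x y z w := by
    simp only [LYD, hb.add₂, hρ.add₁, hρ.add₂, hμ.add₁, hμ.add₂]; abel
  smul₂ c x z w := by
    simp only [LYD, hb.smul₂, hρ.smul₁, hρ.smul₂, hμ.smul₁, hμ.smul₂, smul_sub, smul_add]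
  add₃ x y z w := by
    simp only [LYD, hρ.add₂, hμ.add₃]; abel
  smul₃ c x y z := by
    simp only [LYD, hρ.smul₂, hμ.smul₃, smul_sub, smul_add]

theorem LYD_skew (hg : IsLieYamaguti k b t) (hρ : IsBilinMap k ρ) (x y : g) (v : V) :
    LYD b ρ μ x y v = -LYD b ρ μ y x v := by
  simp only [LYD]
  rw [hg.skew_b x y, hρ.neg₁]
  abel

theorem LYD_cyclic (hg : IsLieYamaguti k b t) (h : IsLYRep k b t ρ μ) (x y z : g) (v : V) :
    LYD b ρ μ (b x y) z v + LYD b ρ μ (b y z) x v + LYD b ρ μ (b z x) y v = 0 := by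
  have key := congrArg (fun a => ρ a v) (hg.ly1 x y z)
  simp only [h.lin.add₁, h.lin.zero₁, h.r3] at key
  simp only [LYD, h.lin.add₂, h.lin.sub₂] at key ⊢
  linear_combination (norm := abel) h.r2 z x y v + h.r2 x y z v + h.r2 y z x v
    - h.r1 x y z v - h.r1 y z x v - h.r1 z x y v - key

theorem LYD_derivation (hg : IsLieYamaguti k b t) (h : IsLYRep k b t ρ μ) (x y z w : g) (v : V) :
    LYD b ρ μ x y (LYD b ρ μ z w v) = LYD b ρ μ (t x y z) w v + LYD b ρ μ z (t x y w) v
      + LYD b ρ μ z w (LYD b ρ μ x y v) := by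
  have hD := LYD_trilin hg.bilin h.lin h.bilin
  -- Only `D(z,w)`, `D(⟦x,y,z⟧,w)`, `D(z,⟦x,y,w⟧)` are expanded; `D(x,y)` stays an opaque operator.
  have e (p q : g) (a : V) : LYD b ρ μ p q a =
      μ q p a - μ p q a + ρ p (ρ q a) - ρ q (ρ p a) - ρ (b p q) a := rfl
  have e₃ := h.r3 x y (b z w) v
  rw [hg.ly3, h.lin.add₁] at e₃
  rw [e z w v, e (t x y z) w, e z (t x y w), e z w]
  simp only [hD.sub₃, hD.add₃, h.r3, h.lin.sub₂]
  linear_combination (norm := abel) h.r5 x y z w v - h.r5 x y w z v + e₃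

theorem IsLYRep.semidirect (hg : IsLieYamaguti k b t) (h : IsLYRep k b t ρ μ) :
    IsLieYamaguti k (sdB b ρ) (sdT b t ρ μ) := by
  have hρ := h.lin
  have hμ := h.bilin
  have hb := hg.bilin
  have ht := hg.trilin
  have hD := LYD_trilin hb hρ hμ
  refine ⟨⟨?_, ?_, ?_, ?_⟩, ⟨?_, ?_, ?_, ?_, ?_, ?_⟩, ?_, ?_, ?_, ?_, ?_, ?_⟩
  · rintro ⟨x, u⟩ ⟨y, v⟩ ⟨z, w⟩
    ext <;> simp only [sdB, Prod.mk_add_mk, hb.add₁, hρ.add₁, hρ.add₂]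
    abel
  · rintro c ⟨x, u⟩ ⟨y, v⟩
    ext <;> simp only [sdB, Prod.smul_mk, hb.smul₁, hρ.smul₁, hρ.smul₂, smul_sub]
  · rintro ⟨x, u⟩ ⟨y, v⟩ ⟨z, w⟩
    ext <;> simp only [sdB, Prod.mk_add_mk, hb.add₂, hρ.add₁, hρ.add₂]
    abel
  · rintro c ⟨x, u⟩ ⟨y, v⟩
    ext <;> simp only [sdB, Prod.smul_mk, hb.smul₂, hρ.smul₁, hρ.smul₂, smul_sub]
  · rintro ⟨x, u⟩ ⟨y, v⟩ ⟨z, w⟩ ⟨s, a⟩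
    ext <;> simp only [sdT, Prod.mk_add_mk, ht.add₁, hD.add₁, hμ.add₁, hμ.add₃]
    abel
  · rintro c ⟨x, u⟩ ⟨y, v⟩ ⟨z, w⟩
    ext <;> simp only [sdT, Prod.smul_mk, ht.smul₁, hD.smul₁, hμ.smul₁, hμ.smul₃, smul_sub,
      smul_add]
  · rintro ⟨x, u⟩ ⟨y, v⟩ ⟨z, w⟩ ⟨s, a⟩
    ext <;> simp only [sdT, Prod.mk_add_mk, ht.add₂, hD.add₂, hμ.add₁, hμ.add₃]
    abel
  · rintro c ⟨x, u⟩ ⟨y, v⟩ ⟨z, w⟩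
    ext <;> simp only [sdT, Prod.smul_mk, ht.smul₂, hD.smul₂, hμ.smul₁, hμ.smul₃, smul_sub,
      smul_add]
  · rintro ⟨x, u⟩ ⟨y, v⟩ ⟨z, w⟩ ⟨s, a⟩
    ext <;> simp only [sdT, Prod.mk_add_mk, ht.add₃, hD.add₃, hμ.add₂]
    abel
  · rintro c ⟨x, u⟩ ⟨y, v⟩ ⟨z, w⟩
    ext <;> simp only [sdT, Prod.smul_mk, ht.smul₃, hD.smul₃, hμ.smul₂, smul_sub, smul_add]
  · rintro ⟨x, u⟩ ⟨y, v⟩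
    ext
    · exact hg.skew_b x y
    · simp only [sdB, Prod.snd_neg]; abel
  · rintro ⟨x, u⟩ ⟨y, v⟩ ⟨z, w⟩
    ext
    · exact hg.skew_t x y z
    · simp only [sdT, Prod.snd_neg]
      rw [LYD_skew hg hρ x y]; abel
  · rintro ⟨x, u⟩ ⟨y, v⟩ ⟨z, w⟩
    ext
    · exact hg.ly1 x y z
    · simp only [sdB, sdT, LYD, Prod.snd_add, Prod.snd_zero, hρ.sub₂]; abel
  · rintro ⟨x, u⟩ ⟨y, v⟩ ⟨z, w⟩ ⟨s, a⟩
    ext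
    · exact hg.ly2 x y z s
    · simp only [sdB, sdT, Prod.snd_add, Prod.snd_zero, hμ.sub₃]
      linear_combination (norm := abel) LYD_cyclic hg h x y z a
        - h.r1 y z s u - h.r1 z x s v - h.r1 x y s w
  · rintro ⟨x, u⟩ ⟨y, v⟩ ⟨z, w⟩ ⟨s, a⟩
    ext
    · exact hg.ly3 x y z s
    · simp only [sdB, sdT, Prod.snd_add, hρ.sub₂, hρ.add₂, hD.sub₃]
      linear_combination (norm := abel) h.r2 y z s u - h.r2 x z s v
        - h.r3 x y z a + h.r3 x y s w
  · rintro ⟨x, u⟩ ⟨y, v⟩ ⟨z, w⟩ ⟨s, a⟩ ⟨r, c⟩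
    ext
    · exact hg.ly4 x y z s r
    · simp only [sdT, Prod.snd_add, hμ.sub₃, hμ.add₃, hD.sub₃, hD.add₃]
      linear_combination (norm := abel) LYD_derivation hg h x y z s c
        - h.r4 y z s r u + h.r4 x z s r v - h.r5 x y s r w + h.r5 x y z r a

/-- Each representation axiom is the `V`-component of a Lie-Yamaguti axiom of `g × V`, evaluated
with one argument `(0, v)` and the others of the form `(x, 0)`. -/
theorem IsLYRep.of_semidirect (hg : IsLieYamaguti k b t) (hρ : IsBilinMap k ρ)
    (hμ : IsTrilinMap k μ) (h : IsLieYamaguti k (sdB b ρ) (sdT b t ρ μ)) :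
    IsLYRep k b t ρ μ := by
  have hb := hg.bilin
  have ht := hg.trilin
  have hD := LYD_trilin hb hρ hμ
  refine ⟨hρ, hμ, fun x y z v => ?_, fun x y z v => ?_, fun x y z v => ?_,
    fun x y z w v => ?_, fun x y z w v => ?_⟩
  · have e := congrArg Prod.snd (h.ly2 (0, v) (x, 0) (y, 0) (z, 0))
    simp only [sdB, sdT, Prod.snd_add, Prod.snd_zero, hb.zero₁, hb.zero₂, hρ.zero₁, hρ.zero₂,
      hμ.zero₁, hμ.zero₃, hD.zero₃, hμ.sub₃] at e
    linear_combination (norm := abel) -e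
  · have e := congrArg Prod.snd (h.ly3 (0, v) (x, 0) (y, 0) (z, 0))
    simp only [sdB, sdT, Prod.snd_add, ht.zero₁, hρ.zero₁, hρ.zero₂, hμ.zero₁,
      hD.zero₁, hρ.add₂, hρ.sub₂] at e
    linear_combination (norm := abel) e
  · have e := congrArg Prod.snd (h.ly3 (x, 0) (y, 0) (z, 0) (0, v))
    simp only [sdB, sdT, Prod.snd_add, ht.zero₃, hρ.zero₁, hρ.zero₂, hμ.zero₂, hμ.zero₃,
      hρ.add₂, hρ.sub₂, hD.zero₃, hD.sub₃] at e
    linear_combination (norm := abel) -e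
  · have e := congrArg Prod.snd (h.ly4 (0, v) (x, 0) (y, 0) (z, 0) (w, 0))
    simp only [sdT, Prod.snd_add, ht.zero₁, hμ.zero₁, hμ.zero₂, hμ.zero₃, hμ.add₃, hμ.sub₃,
      hD.zero₁, hD.zero₂, hD.zero₃, hD.add₃, hD.sub₃] at e
    linear_combination (norm := abel) -e
  · have e := congrArg Prod.snd (h.ly4 (x, 0) (y, 0) (0, v) (z, 0) (w, 0))
    simp only [sdT, Prod.snd_add, ht.zero₃, hμ.zero₁, hμ.zero₂, hμ.zero₃, hμ.add₃, hμ.sub₃,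
      hD.zero₁, hD.zero₃, hD.add₃, hD.sub₃] at e
    linear_combination (norm := abel) -e

end Helpers


/-- `(V; ρ, μ)` is a representation of a Lie-Yamaguti algebra `g` if and only if
the semidirect product brackets make `g ⊕ V` into a Lie-Yamaguti algebra. -/
theorem statement1 {k g V : Type*} [Field k] [CharZero k]
    [AddCommGroup g] [Module k g] [AddCommGroup V] [Module k V]
    (b : g → g → g) (t : g → g → g → g) (hg : IsLieYamaguti k b t)
    (ρ : g → V → V) (μ : g → g → V → V) (hρ : IsBilinMap k ρ) (hμ : IsTrilinMap k μ) :
    IsLYRep k b t ρ μ ↔ IsLieYamaguti k (sdB b ρ) (sdT b t ρ μ) := by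
  exact ⟨fun h => h.semidirect hg, fun h => IsLYRep.of_semidirect hg hρ hμ h⟩
end

section
/- Let g be a Lie-Yamaguti algebra over a field of characteristic 0 and (V;ρ,μ) a representation of g. Then (V*; ρ*, −μ*τ) is a representation of g on the dual space V*, where ⟨ρ*(x)α,v⟩ := −⟨α,ρ(x)v⟩, ⟨μ*(x,y)α,v⟩ := −⟨α,μ(x,y)v⟩ and (−μ*τ)(x,y) := −μ*(y,x). Moreover, the operator D' associated to (ρ*,−μ*τ) is the dual of the operator D associated to (ρ,μ): ⟨D'(x,y)α, v⟩ = −⟨α, D(x,y)v⟩ for all x,y in g, α in V*, v in V. -/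
section DualRep

variable {k g V : Type*} [Field k] [AddCommGroup g] [Module k g] [AddCommGroup V] [Module k V]

/-- The map `ρ*`: `ρ*(x)` is minus the transpose of `ρ(x)`. -/
def rhoStar {ρ : g → V → V} (h : IsBilinMap k ρ) (x : g) (α : Module.Dual k V) :
    Module.Dual k V :=
  -(α.comp (IsLinearMap.mk' (ρ x) (h.right x)))

/-- The map `-μ*τ`: its value at `(x, y)` is the transpose of `μ(y, x)`, the sign in `-μ*τ`
cancelling the one in the definition of `μ*`. -/
def negMuStarTau {μ : g → g → V → V} (h : IsTrilinMap k μ) (x y : g) (α : Module.Dual k V) :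
    Module.Dual k V :=
  α.comp (IsLinearMap.mk' (μ y x) (h.third y x))

theorem rhoStar_apply {ρ : g → V → V} (h : IsBilinMap k ρ) (x : g) (α : Module.Dual k V)
    (v : V) : rhoStar h x α v = -α (ρ x v) := rfl

theorem negMuStarTau_apply {μ : g → g → V → V} (h : IsTrilinMap k μ) (x y : g)
    (α : Module.Dual k V) (v : V) : negMuStarTau h x y α v = α (μ y x v) := rfl

theorem isBilinMap_rhoStar {ρ : g → V → V} (h : IsBilinMap k ρ) :
    IsBilinMap k (rhoStar h) where
  add₁ x y α := by
    ext v; simp only [rhoStar_apply, h.add₁, map_add, LinearMap.add_apply]; ring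
  smul₁ c x α := by
    ext v; simp only [rhoStar_apply, h.smul₁, map_smul, LinearMap.smul_apply, smul_neg]
  add₂ x α β := by
    ext v; simp only [rhoStar_apply, LinearMap.add_apply]; ring
  smul₂ c x α := by
    ext v; simp only [rhoStar_apply, LinearMap.smul_apply, smul_neg]

theorem isTrilinMap_negMuStarTau {μ : g → g → V → V} (h : IsTrilinMap k μ) :
    IsTrilinMap k (negMuStarTau h) where
  add₁ x y z α := by
    ext v; simp only [negMuStarTau_apply, h.add₂, map_add, LinearMap.add_apply]
  smul₁ c x z α := by
    ext v; simp only [negMuStarTau_apply, h.smul₂, map_smul, LinearMap.smul_apply]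
  add₂ x y z α := by
    ext v; simp only [negMuStarTau_apply, h.add₁, map_add, LinearMap.add_apply]
  smul₂ c x z α := by
    ext v; simp only [negMuStarTau_apply, h.smul₁, map_smul, LinearMap.smul_apply]
  add₃ x y α β := by
    ext v; simp only [negMuStarTau_apply, LinearMap.add_apply]
  smul₃ c x y α := by
    ext v; simp only [negMuStarTau_apply, LinearMap.smul_apply]

/-- The operator `D'` of `(ρ*, -μ*τ)` is minus the transpose of `D`: transposition reverses the
products `ρ(x)ρ(y)`, and exchanging the arguments of `μ` reverses the difference
`μ(y,x) - μ(x,y)`. No axiom of a representation beyond multilinearity is involved. -/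
theorem lyd_dual_apply (b : g → g → g) {ρ : g → V → V} {μ : g → g → V → V}
    (hρ : IsBilinMap k ρ) (hμ : IsTrilinMap k μ) (x y : g) (α : Module.Dual k V) (v : V) :
    LYD b (rhoStar hρ) (negMuStarTau hμ) x y α v = -α (LYD b ρ μ x y v) := by
  simp only [LYD, LinearMap.sub_apply, LinearMap.add_apply, rhoStar_apply, negMuStarTau_apply,
    map_sub, map_add]
  ring

theorem isLYRep_dual {b : g → g → g} {t : g → g → g → g} {ρ : g → V → V} {μ : g → g → V → V}
    (hr : IsLYRep k b t ρ μ) :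
    IsLYRep k b t (rhoStar hr.lin) (negMuStarTau hr.bilin) where
  lin := isBilinMap_rhoStar hr.lin
  bilin := isTrilinMap_negMuStarTau hr.bilin
  r1 x y z α := by
    ext v
    have h := congrArg α (hr.r2 z x y v)
    simp only [map_sub, map_add, map_zero] at h
    simp only [LinearMap.sub_apply, LinearMap.add_apply, LinearMap.zero_apply, rhoStar_apply,
      negMuStarTau_apply]
    linear_combination h
  r2 x y z α := by
    ext v
    have h := congrArg α (hr.r1 y z x v)
    simp only [map_sub, map_add, map_zero] at h
    simp only [LinearMap.sub_apply, LinearMap.add_apply, LinearMap.zero_apply, rhoStar_apply,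
      negMuStarTau_apply]
    linear_combination h
  r3 x y z α := by
    ext v
    have h := congrArg α (hr.r3 x y z v)
    simp only [map_sub] at h
    simp only [LinearMap.sub_apply, rhoStar_apply, lyd_dual_apply]
    linear_combination -h
  r4 x y z w α := by
    ext v
    have h₄ := congrArg α (hr.r4 w y z x v)
    have h₅ := congrArg α (hr.r5 y z w x v)
    simp only [map_sub, map_add, map_zero] at h₄ h₅
    simp only [LinearMap.sub_apply, LinearMap.add_apply, LinearMap.zero_apply,
      negMuStarTau_apply, lyd_dual_apply]
    -- `r5` trades `D(y,z)μ(w,x) - μ(w,⟦y,z,x⟧)` for `μ(⟦y,z,w⟧,x) + μ(w,x)D(y,z)` in `r4`.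
    linear_combination -h₄ - h₅
  r5 x y z w α := by
    ext v
    have h := congrArg α (hr.r5 x y w z v)
    simp only [map_sub, map_add] at h
    simp only [LinearMap.sub_apply, LinearMap.add_apply, negMuStarTau_apply, lyd_dual_apply]
    linear_combination h

end DualRep

/-- The dual representation `(V*; ρ*, -μ*τ)` of a representation `(V; ρ, μ)` of a
Lie-Yamaguti algebra, and the duality `D' = D*` of the associated operators. -/
theorem statement2 {k g V : Type*} [Field k] [CharZero k]
    [AddCommGroup g] [Module k g] [AddCommGroup V] [Module k V]
    (b : g → g → g) (t : g → g → g → g) (ρ : g → V → V) (μ : g → g → V → V)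
    (hg : IsLieYamaguti k b t) (hr : IsLYRep k b t ρ μ) :
    IsLYRep k b t
      (fun x (α : Module.Dual k V) => -(α.comp (IsLinearMap.mk' (ρ x) (hr.lin.right x))))
      (fun x y (α : Module.Dual k V) => α.comp (IsLinearMap.mk' (μ y x) (hr.bilin.third y x))) ∧
    (∀ (x y : g) (α : Module.Dual k V) (v : V),
      LYD b (fun x (α : Module.Dual k V) => -(α.comp (IsLinearMap.mk' (ρ x) (hr.lin.right x))))
        (fun x y (α : Module.Dual k V) => α.comp (IsLinearMap.mk' (μ y x) (hr.bilin.third y x)))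
        x y α v
      = -(α (LYD b ρ μ x y v))) := by
  exact ⟨isLYRep_dual hr, lyd_dual_apply b hr.lin hr.bilin⟩
end

section
/- Let (A,*,{·,·,·}) be a pre-Lie-Yamaguti algebra over a field of characteristic 0. Then the brackets [x,y]_C := x*y−y*x and ⟦x,y,z⟧_C := {x,y,z}_D+{x,y,z}−{y,x,z} (with {x,y,z}_D := {z,y,x}−{z,x,y}+(y,x,z)−(x,y,z), where (x,y,z) denotes the associator of *) define a Lie-Yamaguti algebra structure on A (the sub-adjacent Lie-Yamaguti algebra A^c). -/
section SubAdjacent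

variable {k A : Type*} [Field k] [AddCommGroup A] [Module k A] {m : A → A → A}
  {t : A → A → A → A}

theorem IsBilinMap.sub₁ (h : IsBilinMap k m) (x y z : A) : m (x - y) z = m x z - m y z := by
  have := h.add₁ (x - y) y z
  rw [sub_add_cancel] at this
  rw [this, add_sub_cancel_right]

theorem IsBilinMap.sub₂_s3 (h : IsBilinMap k m) (x y z : A) : m x (y - z) = m x y - m x z := by
  have := h.add₂ x (y - z) z
  rw [sub_add_cancel] at this
  rw [this, add_sub_cancel_right]

theorem IsTrilinMap.sub₁ (h : IsTrilinMap k t) (x y z w : A) :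
    t (x - y) z w = t x z w - t y z w := by
  have := h.add₁ (x - y) y z w
  rw [sub_add_cancel] at this
  rw [this, add_sub_cancel_right]

theorem IsTrilinMap.sub₂_s3 (h : IsTrilinMap k t) (x y z w : A) :
    t x (y - z) w = t x y w - t x z w := by
  have := h.add₂ x (y - z) z w
  rw [sub_add_cancel] at this
  rw [this, add_sub_cancel_right]

theorem IsTrilinMap.sub₃_s3 (h : IsTrilinMap k t) (x y z w : A) :
    t x y (z - w) = t x y z - t x y w := by
  have := h.add₃ x y (z - w) w
  rw [sub_add_cancel] at this
  rw [this, add_sub_cancel_right]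

theorem isTrilinMap_preD (hm : IsBilinMap k m) (ht : IsTrilinMap k t) :
    IsTrilinMap k (preD m t) := by
  constructor <;> intros <;>
    simp only [preD, preAssoc, hm.add₁, hm.add₂, hm.smul₁, hm.smul₂, ht.add₁, ht.add₂, ht.add₃,
      ht.smul₁, ht.smul₂, ht.smul₃, smul_sub, smul_add] <;> abel

theorem isTrilinMap_subAdjT (hm : IsBilinMap k m) (ht : IsTrilinMap k t) :
    IsTrilinMap k (subAdjT m t) := by
  have hD := isTrilinMap_preD hm ht
  constructor <;> intros <;>
    simp only [subAdjT, hD.add₁, hD.add₂, hD.add₃, hD.smul₁, hD.smul₂, hD.smul₃, ht.add₁, ht.add₂,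
      ht.add₃, ht.smul₁, ht.smul₂, ht.smul₃, smul_sub, smul_add] <;> abel

/-- `D(x,y) = R(y,x) - R(x,y) + [L_x, L_y] - L_{[x,y]}`, evaluated at `v`. -/
theorem preD_eq (hm : IsBilinMap k m) (x y v : A) :
    preD m t x y v
      = t v y x - t v x y + m x (m y v) - m y (m x v) - m (subAdjB m x y) v := by
  simp only [preD, preAssoc, subAdjB, hm.sub₁]
  abel

theorem subAdj_cyclic (hm : IsBilinMap k m) (x y z : A) :
    subAdjB m (subAdjB m x y) z + subAdjB m (subAdjB m y z) x + subAdjB m (subAdjB m z x) y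
      + subAdjT m t x y z + subAdjT m t y z x + subAdjT m t z x y = 0 := by
  simp only [subAdjT, preD, preAssoc, subAdjB, hm.sub₁, hm.sub₂_s3]
  abel

namespace IsPreLieYamaguti

/-- `[D(x,y), L_z] = L_{T(x,y,z)}`. -/
theorem preD_mul (h : IsPreLieYamaguti k m t) (x y z v : A) :
    preD m t x y (m z v) = m z (preD m t x y v) + m (subAdjT m t x y z) v := by
  have := h.p5 x y z v
  simp only [subAdjT, h.bilin.sub₁, h.bilin.add₁]
  rw [this]
  abel

/-- `[D(x,y), R(w,u)] = R(T(x,y,w),u) + R(w,T(x,y,u))`. -/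
theorem preD_tri (h : IsPreLieYamaguti k m t) (x y v w u : A) :
    preD m t x y (t v w u) = t (preD m t x y v) w u + t v (subAdjT m t x y w) u
      + t v w (subAdjT m t x y u) := by
  have := h.p4 x y v w u
  simp only [subAdjT, h.trilin.sub₂_s3, h.trilin.add₂, h.trilin.sub₃_s3, h.trilin.add₃]
  rw [eq_sub_iff_add_eq] at this
  rw [← this]
  abel

theorem subAdjT_subAdjB (h : IsPreLieYamaguti k m t) (x y z w : A) :
    subAdjT m t x y (subAdjB m z w)
      = subAdjB m (subAdjT m t x y z) w + subAdjB m z (subAdjT m t x y w) := by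
  have hD := isTrilinMap_preD h.bilin h.trilin
  have e1 : preD m t x y (subAdjB m z w)
      = m z (preD m t x y w) + m (subAdjT m t x y z) w
        - (m w (preD m t x y z) + m (subAdjT m t x y w) z) := by
    rw [← h.preD_mul, ← h.preD_mul, ← hD.sub₃_s3, subAdjB]
  have e2 : ∀ a b, m a (subAdjT m t x y b)
      = m a (preD m t x y b) + m a (t x y b) - m a (t y x b) := by
    intro a b
    rw [subAdjT, h.bilin.sub₂_s3, h.bilin.add₂]
  have e3 : ∀ a b, t a b (subAdjB m z w) = m z (t a b w) - m w (t a b z) :=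
    fun a b => h.p2 a b z w
  rw [subAdjT, e1, e3, e3]
  simp only [subAdjB, e2]
  abel

/-- The cyclic sum of `D([x,y],z)` vanishes. -/
theorem preD_cyclic (h : IsPreLieYamaguti k m t) (x y z w : A) :
    preD m t (subAdjB m x y) z w + preD m t (subAdjB m y z) x w
      + preD m t (subAdjB m z x) y w = 0 := by
  have hL := congrArg (fun a => m a w) (subAdj_cyclic (t := t) h.bilin x y z)
  have h0 : m 0 w = 0 := by simpa using h.bilin.smul₁ 0 0 w
  simp only [h.bilin.add₁, h0] at hL
  have e1 : ∀ a b c, m (subAdjT m t a b c) w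
      = preD m t a b (m c w) - m c (preD m t a b w) := by
    intro a b c
    rw [h.preD_mul]
    abel
  have e2 : ∀ a b c, t w c (subAdjB m a b) = m a (t w c b) - m b (t w c a) :=
    fun a b c => h.p2 w c a b
  have e3 : ∀ a b c, t w (subAdjB m a b) c = t (m b w) a c - t (m a w) b c := by
    intro a b c
    have := h.p1 a b w c
    rw [subAdjB, ← sub_eq_zero, ← this]
    abel
  simp only [e1, preD_eq h.bilin x y, preD_eq h.bilin y z, preD_eq h.bilin z x,
    h.bilin.sub₂_s3, h.bilin.add₂] at hL
  simp only [preD_eq h.bilin _ _ w, e2, e3]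
  rw [← neg_eq_zero, ← hL]
  abel

theorem subAdjT_cyclic (h : IsPreLieYamaguti k m t) (x y z w : A) :
    subAdjT m t (subAdjB m x y) z w + subAdjT m t (subAdjB m y z) x w
      + subAdjT m t (subAdjB m z x) y w = 0 := by
  have e3 : ∀ a b c, t c (subAdjB m a b) w = t (m b c) a w - t (m a c) b w := by
    intro a b c
    have := h.p1 a b c w
    rw [subAdjB, ← sub_eq_zero, ← this]
    abel
  have e4 : ∀ a b c, t (subAdjB m a b) c w = t (m a b) c w - t (m b a) c w :=
    fun a b c => h.trilin.sub₁ _ _ _ _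
  simp only [subAdjT, e3, e4]
  rw [← h.preD_cyclic x y z w]
  abel

/-- `[D(x,y), D(z,w)] = D(T(x,y,z),w) + D(z,T(x,y,w))`. -/
theorem preD_preD (h : IsPreLieYamaguti k m t) (x y z w v : A) :
    preD m t x y (preD m t z w v) = preD m t z w (preD m t x y v)
      + preD m t (subAdjT m t x y z) w v + preD m t z (subAdjT m t x y w) v := by
  have hD := isTrilinMap_preD h.bilin h.trilin
  rw [preD_eq h.bilin z w v, preD_eq h.bilin z w (preD m t x y v),
    preD_eq h.bilin (subAdjT m t x y z), preD_eq h.bilin z (subAdjT m t x y w)]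
  simp only [hD.sub₃_s3, hD.add₃, h.preD_tri, h.preD_mul, h.subAdjT_subAdjB, h.bilin.add₁,
    h.bilin.add₂]
  abel

theorem subAdjT_subAdjT (h : IsPreLieYamaguti k m t) (x y z w u : A) :
    subAdjT m t x y (subAdjT m t z w u) = subAdjT m t (subAdjT m t x y z) w u
      + subAdjT m t z (subAdjT m t x y w) u + subAdjT m t z w (subAdjT m t x y u) := by
  have hD := isTrilinMap_preD h.bilin h.trilin
  have e1 : ∀ a b, t a b (subAdjT m t z w u)
      = t (t a b z) w u - t (t a b w) z u + preD m t z w (t a b u) := by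
    intro a b
    have := h.p3 a b z w u
    rw [subAdjT, h.trilin.sub₃_s3, h.trilin.add₃, ← sub_eq_zero, ← neg_eq_zero, ← this]
    abel
  -- The arguments `T(x,y,z)`, `T(x,y,w)` are kept folded inside `D` and in the second slot of the
  -- triple product, and expanded only in its first slot and in the third slot of `D(z,w)`.
  have e2 : ∀ a b c, t (subAdjT m t x y a) b c
      = t (preD m t x y a) b c + t (t x y a) b c - t (t y x a) b c := by
    intro a b c
    rw [subAdjT, h.trilin.sub₁, h.trilin.add₁]
  have e3 : preD m t z w (subAdjT m t x y u)
      = preD m t z w (preD m t x y u) + preD m t z w (t x y u) - preD m t z w (t y x u) := by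
    rw [subAdjT, hD.sub₃_s3, hD.add₃]
  have e4 : preD m t x y (subAdjT m t z w u)
      = preD m t x y (preD m t z w u) + preD m t x y (t z w u) - preD m t x y (t w z u) := by
    rw [subAdjT, hD.sub₃_s3, hD.add₃]
  have f : ∀ a b c, subAdjT m t a b c = preD m t a b c + t a b c - t b a c := fun _ _ _ => rfl
  rw [f x y (subAdjT m t z w u), f (subAdjT m t x y z) w u, f z (subAdjT m t x y w) u,
    f z w (subAdjT m t x y u), e1, e1, e2, e2, e3, e4, h.preD_preD, h.preD_tri, h.preD_tri]
  abel

end IsPreLieYamaguti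

end SubAdjacent

/-- The sub-adjacent brackets of a pre-Lie-Yamaguti algebra define a
Lie-Yamaguti algebra structure. -/
theorem statement3 {k A : Type*} [Field k] [CharZero k] [AddCommGroup A] [Module k A]
    (m : A → A → A) (t : A → A → A → A) (h : IsPreLieYamaguti k m t) :
    IsLieYamaguti k (subAdjB m) (subAdjT m t) := by
  have hm := h.bilin
  exact
    { bilin := by
        constructor <;> intros <;>
          simp only [subAdjB, hm.add₁, hm.add₂, hm.smul₁, hm.smul₂, smul_sub] <;> abel
      trilin := isTrilinMap_subAdjT hm h.trilin
      skew_b := fun x y => by simp only [subAdjB]; abel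
      skew_t := fun x y z => by simp only [subAdjT, preD]; abel
      ly1 := subAdj_cyclic hm
      ly2 := h.subAdjT_cyclic
      ly3 := h.subAdjT_subAdjB
      ly4 := h.subAdjT_subAdjT }
end

section
/- Let (A,*,{·,·,·}) be a pre-Lie-Yamaguti algebra over a field of characteristic 0, and let A^c be its sub-adjacent Lie-Yamaguti algebra with brackets [x,y]_C := x*y−y*x and ⟦x,y,z⟧_C := {x,y,z}_D+{x,y,z}−{y,x,z}. Define L: A → End(A) by L_x z = x*z and R: A×A → End(A) by R(x,y)z = {z,x,y}. Then (A;L,R) is a representation of the Lie-Yamaguti algebra A^c on A, the associated operator D_{L,R}(x,y) satisfies D_{L,R}(x,y)z = {x,y,z}_D, and the identity map Id: A → A is a relative Rota-Baxter operator on A^c with respect to the representation (A;L,R). -/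
theorem IsBilinMap.sub_left {k M N P : Type*} [Field k] [AddCommGroup M] [Module k M]
    [AddCommGroup N] [Module k N] [AddCommGroup P] [Module k P] {f : M → N → P}
    (h : IsBilinMap k f) (x y : M) (z : N) : f (x - y) z = f x z - f y z :=
  eq_sub_of_add_eq (by rw [← h.add₁, sub_add_cancel])

theorem IsTrilinMap.sub_middle {k M N P Q : Type*} [Field k] [AddCommGroup M] [Module k M]
    [AddCommGroup N] [Module k N] [AddCommGroup P] [Module k P] [AddCommGroup Q] [Module k Q]
    {f : M → N → P → Q} (h : IsTrilinMap k f) (x : M) (y z : N) (w : P) :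
    f x (y - z) w = f x y w - f x z w :=
  eq_sub_of_add_eq (by rw [← h.add₂, sub_add_cancel])

theorem IsTrilinMap.sub_right {k M N P Q : Type*} [Field k] [AddCommGroup M] [Module k M]
    [AddCommGroup N] [Module k N] [AddCommGroup P] [Module k P] [AddCommGroup Q] [Module k Q]
    {f : M → N → P → Q} (h : IsTrilinMap k f) (x : M) (y : N) (z w : P) :
    f x y (z - w) = f x y z - f x y w :=
  (h.third x y).map_sub z w


/-- `(A; L, R)` is a representation of the sub-adjacent Lie-Yamaguti algebra `A^c`
of a pre-Lie-Yamaguti algebra, `D_{L,R}(x,y)z = {x,y,z}_D`, and the identity is a relative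
Rota-Baxter operator with respect to `(A; L, R)`. -/
theorem statement4 {k A : Type*} [Field k] [CharZero k] [AddCommGroup A] [Module k A]
    (m : A → A → A) (t : A → A → A → A) (h : IsPreLieYamaguti k m t) :
    IsLYRep k (subAdjB m) (subAdjT m t) (fun x z => m x z) (fun x y z => t z x y) ∧
    (∀ x y z, LYD (subAdjB m) (fun x z => m x z) (fun x y z => t z x y) x y z
      = preD m t x y z) ∧
    IsRelRotaBaxter (subAdjB m) (subAdjT m t) (fun x z => m x z) (fun x y z => t z x y)
      (id : A → A) := by
  have hD : ∀ x y z, LYD (subAdjB m) (fun x z => m x z) (fun x y z => t z x y) x y z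
      = preD m t x y z := by
    intro x y z
    simp only [LYD, subAdjB, preD, preAssoc, h.bilin.sub_left]
    abel
  refine ⟨⟨h.bilin, ?_, ?_, ?_, ?_, ?_, ?_⟩, hD, fun _ _ => rfl, ?_⟩
  · exact ⟨fun x y z w => h.trilin.add₂ w x y z, fun c x z w => h.trilin.smul₂ c w x z,
      fun x y z w => h.trilin.add₃ w x y z, fun c x y w => h.trilin.smul₃ c w x y,
      fun x y z w => h.trilin.add₁ z w x y, fun c x y z => h.trilin.smul₁ c z x y⟩
  · exact fun x y z v => h.p1 x y v z
  · intro x y z v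
    simp only [subAdjB, h.p2 v x y z]
    abel
  · intro x y z v
    simp only [hD, subAdjT, h.bilin.sub_left, h.bilin.add₁]
    exact h.p5 x y z v
  · intro x y z w v
    rw [← h.p3 v x y z w]
    simp only [hD, subAdjT, h.trilin.sub_right, h.trilin.add₃]
    abel
  · intro x y z w v
    simp only [hD, subAdjT, h.trilin.sub_middle, h.trilin.add₂]
    rw [← h.p4 x y v z w]
    simp only [h.trilin.sub_right, h.trilin.add₃]
    abel
  · intro u v w
    simp only [hD, subAdjT, id]
end

section
/- Let (A,*,{·,·,·}) be a finite-dimensional pre-Lie-Yamaguti algebra over a field of characteristic 0, A^c its sub-adjacent Lie-Yamaguti algebra, (A;L,R) the representation of A^c given by L_x z = x*z and R(x,y)z = {z,x,y}, and A^c ⋉_{L*,−R*τ} A* the semidirect product Lie-Yamaguti algebra of A^c with the dual representation (A*; L*, −R*τ). Then the linear map E: A^c ⋉_{L*,−R*τ} A* → A^c ⋉_{L*,−R*τ} A* given by E(x+α) = x−α (x in A, α in A*) is a perfect paracomplex structure. -/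
section Flip

variable {g V : Type*} [AddCommGroup V] (b : g → g → g) (t : g → g → g → g)
  {ρ : g → V → V} {μ : g → g → V → V}

theorem LYD_neg (hρ : ∀ x v, ρ x (-v) = -ρ x v) (hμ : ∀ x y v, μ x y (-v) = -μ x y v)
    (x y : g) (v : V) : LYD b ρ μ x y (-v) = -LYD b ρ μ x y v := by
  simp only [LYD, hρ, hμ]
  abel

/-- The map `x + v ↦ x - v` is an endomorphism of the binary bracket of `g ⋉ V`. -/
theorem sdB_flip (hρ : ∀ x v, ρ x (-v) = -ρ x v) (p q : g × V) :
    ((sdB b ρ p q).1, -(sdB b ρ p q).2) = sdB b ρ (p.1, -p.2) (q.1, -q.2) := by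
  ext
  · rfl
  · simp only [sdB, hρ]
    abel

/-- The map `x + v ↦ x - v` is an endomorphism of the ternary bracket of `g ⋉ V`. -/
theorem sdT_flip (hρ : ∀ x v, ρ x (-v) = -ρ x v) (hμ : ∀ x y v, μ x y (-v) = -μ x y v)
    (p q r : g × V) :
    ((sdT b t ρ μ p q r).1, -(sdT b t ρ μ p q r).2)
      = sdT b t ρ μ (p.1, -p.2) (q.1, -q.2) (r.1, -r.2) := by
  ext
  · rfl
  · simp only [sdT, hμ, LYD_neg b hρ hμ]
    abel

/-- The integrability condition of a product structure for the binary bracket of `g ⋉ V` and the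
map `x + v ↦ x - v`. -/
theorem sdB_integ [AddCommGroup g] (hρ : ∀ x v, ρ x (-v) = -ρ x v) (p q : g × V) :
    sdB b ρ (p.1, -p.2) (q.1, -q.2)
      = ((sdB b ρ (p.1, -p.2) q).1, -(sdB b ρ (p.1, -p.2) q).2)
        + ((sdB b ρ p (q.1, -q.2)).1, -(sdB b ρ p (q.1, -q.2)).2) - sdB b ρ p q := by
  ext
  · simp [sdB]
  · simp only [sdB, hρ, Prod.snd_add, Prod.snd_sub]
    abel

/-- The integrability condition of a product structure for the ternary bracket of `g ⋉ V` and the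
map `E : x + v ↦ x - v`. -/
theorem sdT_integ [AddCommGroup g] (hρ : ∀ x v, ρ x (-v) = -ρ x v)
    (hμ : ∀ x y v, μ x y (-v) = -μ x y v) (E : g × V → g × V) (hE : ∀ p, E p = (p.1, -p.2))
    (p q r : g × V) :
    sdT b t ρ μ (E p) (E q) (E r)
      = E (sdT b t ρ μ (E p) (E q) r) + E (sdT b t ρ μ p (E q) (E r))
        + E (sdT b t ρ μ (E p) q (E r)) - sdT b t ρ μ (E p) q r - sdT b t ρ μ p (E q) r
        - sdT b t ρ μ p q (E r) + E (sdT b t ρ μ p q r) := by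
  ext
  · simp only [hE, sdT, Prod.fst_add, Prod.fst_sub]
    abel
  · simp only [hE, sdT, hμ, LYD_neg b hρ hμ, Prod.snd_add, Prod.snd_sub]
    abel

end Flip

section Eigenspaces

variable {k g V : Type*} [Field k] [CharZero k] [AddCommGroup g] [Module k g] [AddCommGroup V]
  [Module k V]

theorem eigenspaceOf_flip_one (hE : IsLinearMap k (fun p : g × V => (p.1, -p.2))) :
    eigenspaceOf hE 1 = LinearMap.range (LinearMap.inl k g V) := by
  have := IsAddTorsionFree.of_isTorsionFree k V
  ext ⟨x, v⟩
  simp [eigenspaceOf, sub_eq_zero, eq_comm (a := (0 : V)), neg_eq_self (a := v)]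

theorem eigenspaceOf_flip_neg_one (hE : IsLinearMap k (fun p : g × V => (p.1, -p.2))) :
    eigenspaceOf hE (-1) = LinearMap.range (LinearMap.inr k g V) := by
  have := IsAddTorsionFree.of_isTorsionFree k g
  ext ⟨x, v⟩
  simp [eigenspaceOf, ← two_nsmul, eq_comm (a := (0 : g))]

end Eigenspaces

/-- On the semidirect product Lie-Yamaguti algebra `A^c ⋉_{L*, -R*τ} A*` of a
finite-dimensional pre-Lie-Yamaguti algebra with the dual representation, the map
`E(x + α) = x - α` is a perfect paracomplex structure. -/
theorem statement6 {k A : Type*} [Field k] [CharZero k] [AddCommGroup A] [Module k A]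
    [FiniteDimensional k A] [Nontrivial A]
    (m : A → A → A) (t : A → A → A → A) (h : IsPreLieYamaguti k m t) :
    IsParacomplex k
      (sdB (subAdjB m) (dualRho h.bilin))
      (sdT (subAdjB m) (subAdjT m t) (dualRho h.bilin) (dualMu h.trilin))
      (fun p : A × Module.Dual k A => (p.1, -p.2)) ∧
    IsPerfectMap
      (sdB (subAdjB m) (dualRho h.bilin))
      (sdT (subAdjB m) (subAdjT m t) (dualRho h.bilin) (dualMu h.trilin))
      (fun p : A × Module.Dual k A => (p.1, -p.2)) := by
  have hρ : ∀ x (α : Module.Dual k A), dualRho h.bilin x (-α) = -dualRho h.bilin x α :=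
    fun x α => by simp [dualRho, LinearMap.neg_comp]
  have hμ : ∀ x y (α : Module.Dual k A), dualMu h.trilin x y (-α) = -dualMu h.trilin x y α :=
    fun x y α => by simp [dualMu, LinearMap.neg_comp]
  refine ⟨⟨⟨⟨?_, ?_⟩, ?_, ?_, ?_, ?_, ?_⟩, ?_⟩, ?_, ?_⟩
  · intro p q
    ext1
    · rfl
    · exact neg_add _ _
  · intro c p
    ext1
    · rfl
    · exact (smul_neg _ _).symm
  · intro p
    simp
  · intro hid
    obtain ⟨α, hα⟩ := exists_ne (0 : Module.Dual k A)
    have h2 : -α = α := congrArg Prod.snd (congrFun hid (0, α))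
    have := IsAddTorsionFree.of_isTorsionFree k (Module.Dual k A)
    exact hα (self_eq_neg.mp h2.symm)
  · intro hid
    obtain ⟨x, hx⟩ := exists_ne (0 : A)
    have h2 : x = -x := congrArg Prod.fst (congrFun hid (x, 0))
    have := IsAddTorsionFree.of_isTorsionFree k A
    exact hx (self_eq_neg.mp h2)
  · exact sdB_integ _ hρ
  · exact sdT_integ _ _ hρ hμ _ fun _ => rfl
  · rw [eigenspaceOf_flip_one, eigenspaceOf_flip_neg_one,
      LinearMap.finrank_range_of_inj LinearMap.inl_injective,
      LinearMap.finrank_range_of_inj LinearMap.inr_injective, Subspace.dual_finrank_eq]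
  · exact sdB_flip _ hρ
  · exact sdT_flip _ _ hρ hμ
end

section
/- Let (A,*,{·,·,·}) be a finite-dimensional real pre-Lie-Yamaguti algebra with a nondegenerate symmetric bilinear form B satisfying B(x*y,z) = −B(y,x*z) and B({x,y,z},w) = B(x,{w,z,y}) for all x,y,z,w (an invariant bilinear form), and let B^♯: A → A* be the isomorphism ⟨B^♯(x),y⟩ = B(x,y). Then on the semidirect product Lie-Yamaguti algebra A^c ⋉_{L*,−R*τ} A*, the pair (J,E) is a perfect complex product structure, where E(x+α) = x−α and J(x+α) = −(B^♯)⁻¹(α) + B^♯(x) for x in A, α in A*. -/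
/-! ### Signs in multilinear maps -/

theorem IsBilinMap.neg₁_s8 {M N P : Type*} [AddCommGroup M] [Module ℝ M] [AddCommGroup N]
    [Module ℝ N] [AddCommGroup P] [Module ℝ P] {f : M → N → P} (h : IsBilinMap ℝ f) (x : M)
    (y : N) : f (-x) y = -f x y := by
  simpa using h.smul₁ (-1) x y

theorem IsBilinMap.neg₂_s8 {M N P : Type*} [AddCommGroup M] [Module ℝ M] [AddCommGroup N]
    [Module ℝ N] [AddCommGroup P] [Module ℝ P] {f : M → N → P} (h : IsBilinMap ℝ f) (x : M)
    (y : N) : f x (-y) = -f x y := by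
  simpa using h.smul₂ (-1) x y

section TrilinNeg

variable {M N P Q : Type*} [AddCommGroup M] [Module ℝ M] [AddCommGroup N] [Module ℝ N]
  [AddCommGroup P] [Module ℝ P] [AddCommGroup Q] [Module ℝ Q] {f : M → N → P → Q}

theorem IsTrilinMap.neg₁_s8 (h : IsTrilinMap ℝ f) (x : M) (y : N) (z : P) :
    f (-x) y z = -f x y z := by
  simpa using h.smul₁ (-1) x y z

theorem IsTrilinMap.neg₂_s8 (h : IsTrilinMap ℝ f) (x : M) (y : N) (z : P) :
    f x (-y) z = -f x y z := by
  simpa using h.smul₂ (-1) x y z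

theorem IsTrilinMap.neg₃_s8 (h : IsTrilinMap ℝ f) (x : M) (y : N) (z : P) :
    f x y (-z) = -f x y z := by
  simpa using h.smul₃ (-1) x y z

end TrilinNeg

/-! ### Transport of the dual representation along `B^♯` -/

section Bsharp

variable {A : Type*} [AddCommGroup A] [Module ℝ A] {B : A → A → ℝ} (hB : IsBilinMap ℝ B)

theorem bsharp_add (x y : A) : bsharp hB (x + y) = bsharp hB x + bsharp hB y :=
  LinearMap.ext fun z => hB.add₁ x y z

theorem bsharp_smul (c : ℝ) (x : A) : bsharp hB (c • x) = c • bsharp hB x :=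
  LinearMap.ext fun z => hB.smul₁ c x z

theorem bsharp_neg (x : A) : bsharp hB (-x) = -bsharp hB x :=
  LinearMap.ext fun z => hB.neg₁_s8 x z

theorem bsharp_sub (x y : A) : bsharp hB (x - y) = bsharp hB x - bsharp hB y := by
  rw [sub_eq_add_neg, bsharp_add, bsharp_neg, sub_eq_add_neg]

theorem dualRho_bsharp {m : A → A → A} (hm : IsBilinMap ℝ m)
    (hinv1 : ∀ x y z, B (m x y) z = -B y (m x z)) (x u : A) :
    dualRho hm x (bsharp hB u) = bsharp hB (m x u) :=
  LinearMap.ext fun z => (hinv1 x u z).symm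

theorem dualMu_bsharp {t : A → A → A → A} (ht : IsTrilinMap ℝ t)
    (hinv2 : ∀ x y z w, B (t x y z) w = B x (t w z y)) (x y u : A) :
    dualMu ht x y (bsharp hB u) = bsharp hB (t u x y) :=
  LinearMap.ext fun z => (hinv2 u x y z).symm

end Bsharp

/-! ### The complex product structure -/

/-- A finite-dimensional real pre-Lie-Yamaguti algebra with a nondegenerate
symmetric invariant bilinear form `B` yields a perfect complex product structure `(J, E)` on the
semidirect product `A^c ⋉_{L*, -R*τ} A*`, where `E(x+α) = x - α` and
`J(x+α) = -(B^♯)⁻¹(α) + B^♯(x)`. -/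
theorem statement8 {A : Type*} [AddCommGroup A] [Module ℝ A] [FiniteDimensional ℝ A]
    [Nontrivial A]
    (m : A → A → A) (t : A → A → A → A) (h : IsPreLieYamaguti ℝ m t)
    (B : A → A → ℝ) (hB : IsBilinMap ℝ B)
    (hsymm : ∀ x y, B x y = B y x)
    (hnd : ∀ x, (∀ y, B x y = 0) → x = 0)
    (hinv1 : ∀ x y z, B (m x y) z = -B y (m x z))
    (hinv2 : ∀ x y z w, B (t x y z) w = B x (t w z y))
    (Binv : Module.Dual ℝ A → A)
    (hBinv1 : ∀ x, Binv (bsharp hB x) = x)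
    (hBinv2 : ∀ α, bsharp hB (Binv α) = α) :
    IsPerfectComplexProductStructure ℝ
      (sdB (subAdjB m) (dualRho h.bilin))
      (sdT (subAdjB m) (subAdjT m t) (dualRho h.bilin) (dualMu h.trilin))
      (fun p : A × Module.Dual ℝ A => (-(Binv p.2), bsharp hB p.1))
      (fun p : A × Module.Dual ℝ A => (p.1, -p.2)) := by
  have hm := h.bilin
  have ht := h.trilin
  -- In the coordinates `(x, B^♯ u)` the brackets only involve the products of `A`.
  have hb : ∀ x u y v : A, sdB (subAdjB m) (dualRho h.bilin) (x, bsharp hB u) (y, bsharp hB v)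
      = (m x y - m y x, bsharp hB (m x v - m y u)) := by
    intro x u y v
    simp only [sdB, subAdjB, dualRho_bsharp hB h.bilin hinv1, bsharp_sub]
  have htr : ∀ x u y v z w : A,
      sdT (subAdjB m) (subAdjT m t) (dualRho h.bilin) (dualMu h.trilin)
        (x, bsharp hB u) (y, bsharp hB v) (z, bsharp hB w)
      = (preD m t x y z + t x y z - t y x z,
          bsharp hB (preD m t x y w + t u y z - t v x z)) := by
    intro x u y v z w
    simp only [sdT, LYD, subAdjB, subAdjT, preD, preAssoc, dualRho_bsharp hB h.bilin hinv1,
      dualMu_bsharp hB h.trilin hinv2, bsharp_add, sub_eq_add_neg, hm.add₁, hm.neg₁_s8,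
      bsharp_neg, Prod.mk.injEq, true_and]
    abel
  have hadd : ∀ α β, Binv (α + β) = Binv α + Binv β := by
    intro α β
    rw [← hBinv1 (Binv α + Binv β), bsharp_add, hBinv2, hBinv2]
  have hsmul : ∀ (c : ℝ) α, Binv (c • α) = c • Binv α := by
    intro c α
    rw [← hBinv1 (c • Binv α), bsharp_smul, hBinv2]
  have hneg : ∀ α, Binv (-α) = -Binv α := fun α => by
    rw [← hBinv1 (-Binv α), bsharp_neg, hBinv2]
  have hsurj : ∀ p : A × Module.Dual ℝ A, ∃ x u, p = (x, bsharp hB u) := fun p =>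
    ⟨p.1, Binv p.2, by rw [hBinv2]⟩
  obtain ⟨a, ha⟩ := exists_ne (0 : A)
  have hself : ∀ x : A, x = -x → x = 0 := fun x hx => by
    have h2 : (2 : ℝ) • x = 0 := by rw [two_smul]; exact eq_neg_iff_add_eq_zero.mp hx
    exact (smul_eq_zero.mp h2).resolve_left two_ne_zero
  have ha' : bsharp hB a ≠ -bsharp hB a := by
    rw [← bsharp_neg]
    intro he
    have := congrArg Binv he
    rw [hBinv1, hBinv1] at this
    exact ha (hself a this)
  refine ⟨⟨⟨⟨?_, ?_⟩, ?_, ?_, ?_⟩, ⟨⟨?_, ?_⟩, ?_, ?_, ?_, ?_, ?_⟩, ?_⟩, ?_, ?_⟩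
  · intro p q
    ext1
    · simp only [Prod.fst_add, Prod.snd_add, hadd]; abel
    · simp only [Prod.fst_add, Prod.snd_add, bsharp_add]
  · intro c p
    ext1
    · simp only [Prod.smul_fst, Prod.smul_snd, hsmul, smul_neg]
    · simp only [Prod.smul_fst, Prod.smul_snd, bsharp_smul]
  · intro p
    ext1
    · simp only [hBinv1, Prod.fst_neg]
    · simp only [bsharp_neg, hBinv2, Prod.snd_neg]
  · intro p q
    obtain ⟨x, u, rfl⟩ := hsurj p
    obtain ⟨y, v, rfl⟩ := hsurj q
    simp only [hBinv1, hb, Prod.mk_add_mk, ← bsharp_add]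
    ext1
    · simp only [hm.neg₁_s8, hm.neg₂_s8]; abel
    · refine congrArg (bsharp hB) ?_
      simp only [hm.neg₁_s8, hm.neg₂_s8]; abel
  · intro p q r
    obtain ⟨x, u, rfl⟩ := hsurj p
    obtain ⟨y, v, rfl⟩ := hsurj q
    obtain ⟨z, w, rfl⟩ := hsurj r
    simp only [hBinv1, htr, Prod.mk_add_mk, Prod.neg_mk, ← bsharp_add, ← bsharp_neg]
    ext1
    · simp only [preD, preAssoc, hm.neg₁_s8, hm.neg₂_s8, ht.neg₁_s8, ht.neg₂_s8, ht.neg₃_s8]; abel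
    · refine congrArg (bsharp hB) ?_
      simp only [preD, preAssoc, hm.neg₁_s8, hm.neg₂_s8, ht.neg₁_s8, ht.neg₂_s8, ht.neg₃_s8]; abel
  · intro p q
    ext1
    · rfl
    · simp only [Prod.snd_add, neg_add]
  · intro c p
    ext1
    · rfl
    · simp only [Prod.smul_snd, smul_neg]
  · intro p
    simp only [neg_neg]
  · intro he
    exact ha' (congrArg Prod.snd (congrFun he (0, bsharp hB a))).symm
  · intro he
    have := congrArg Prod.fst (congrFun he (a, 0))
    exact ha (hself a this)
  · intro p q
    obtain ⟨x, u, rfl⟩ := hsurj p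
    obtain ⟨y, v, rfl⟩ := hsurj q
    simp only [hb, Prod.mk_add_mk, Prod.mk_sub_mk, ← bsharp_add, ← bsharp_neg, ← bsharp_sub]
    ext1
    · dsimp only; abel
    · refine congrArg (bsharp hB) ?_
      simp only [hm.neg₂_s8]; abel
  · intro p q r
    obtain ⟨x, u, rfl⟩ := hsurj p
    obtain ⟨y, v, rfl⟩ := hsurj q
    obtain ⟨z, w, rfl⟩ := hsurj r
    simp only [htr, Prod.mk_add_mk, Prod.mk_sub_mk, ← bsharp_add, ← bsharp_neg, ← bsharp_sub]
    ext1
    · dsimp only; abel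
    · refine congrArg (bsharp hB) ?_
      simp only [preD, preAssoc, hm.neg₂_s8, ht.neg₁_s8]; abel
  · intro p
    ext1
    · simp only [hneg, Prod.fst_neg, neg_neg]
    · rfl
  · intro p q
    obtain ⟨x, u, rfl⟩ := hsurj p
    obtain ⟨y, v, rfl⟩ := hsurj q
    simp only [hb, ← bsharp_neg, hm.neg₂_s8]
    ext1
    · rfl
    · refine congrArg (bsharp hB) ?_
      abel
  · intro p q r
    obtain ⟨x, u, rfl⟩ := hsurj p
    obtain ⟨y, v, rfl⟩ := hsurj q
    obtain ⟨z, w, rfl⟩ := hsurj r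
    simp only [htr, ← bsharp_neg]
    ext1
    · rfl
    · refine congrArg (bsharp hB) ?_
      simp only [preD, preAssoc, hm.neg₂_s8, ht.neg₁_s8]; abel
end

section
/- Let (g,ω) be a finite-dimensional symplectic Lie-Yamaguti algebra over a field of characteristic 0. Then there exists a paracomplex structure E on g such that (g,ω,E) is a para-Kähler Lie-Yamaguti algebra if and only if there exist two Lie-Yamaguti subalgebras g₊ and g₋ of g, each isotropic with respect to ω, such that g = g₊ ⊕ g₋ as a direct sum of vector spaces. -/
section

variable {k g : Type*} [Field k] [AddCommGroup g] [Module k g]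

theorem mem_eigenspaceOf {E : g → g} (hE : IsLinearMap k E) (c : k) (x : g) :
    x ∈ eigenspaceOf hE c ↔ E x = c • x := by
  simp [eigenspaceOf, LinearMap.mem_ker, sub_eq_zero]

/-- Nondegeneracy makes `x ↦ ω x · |_q` an embedding of `p` into the dual of `q`. -/
theorem finrank_le_of_isotropic [FiniteDimensional k g] {ω : g → g → k} (hb : IsBilinMap k ω)
    (hn : ∀ x, (∀ y, ω x y = 0) → x = 0) {p q : Submodule k g}
    (hp : ∀ x ∈ p, ∀ y ∈ p, ω x y = 0) (hpq : p ⊔ q = ⊤) :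
    Module.finrank k p ≤ Module.finrank k q := by
  let f : p →ₗ[k] Module.Dual k q :=
    LinearMap.mk₂ k (fun x y => ω x y) (fun x y z => hb.add₁ x y z) (fun c x z => hb.smul₁ c x z)
      (fun x y z => hb.add₂ x y z) (fun c x z => hb.smul₂ c x z)
  have hf : Function.Injective f := by
    rw [injective_iff_map_eq_zero]
    intro x hx
    apply Subtype.ext
    apply hn
    intro y
    obtain ⟨u, hu, v, hv, rfl⟩ := Submodule.mem_sup.1 (hpq ▸ Submodule.mem_top : y ∈ p ⊔ q)
    have h : ω x v = 0 := LinearMap.congr_fun hx ⟨v, hv⟩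
    rw [hb.add₂, hp x x.2 u hu, h, add_zero]
  calc Module.finrank k p ≤ Module.finrank k (Module.Dual k q) :=
        LinearMap.finrank_le_finrank_of_injective hf
    _ = Module.finrank k q := Subspace.dual_finrank_eq

/-- The linear involution that is `1` on `p` and `-1` on `q`. -/
theorem exists_involution {p q : Submodule k g} (hc : IsCompl p q) :
    ∃ E : g →ₗ[k] g, (∀ x ∈ p, E x = x) ∧ (∀ x ∈ q, E x = -x) := by
  refine ⟨LinearMap.ofIsCompl hc p.subtype (-q.subtype), fun x hx => ?_, fun x hx => ?_⟩
  · exact LinearMap.ofIsCompl_apply_left hc ⟨x, hx⟩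
  · exact LinearMap.ofIsCompl_apply_right hc ⟨x, hx⟩

variable [CharZero k]

theorem isCompl_eigenspaceOf {E : g → g} (hE : IsLinearMap k E) (hi : ∀ x, E (E x) = x) :
    IsCompl (eigenspaceOf hE 1) (eigenspaceOf hE (-1)) := by
  constructor
  · rw [Submodule.disjoint_def]
    intro x h1 h2
    rw [mem_eigenspaceOf] at h1 h2
    linear_combination (norm := module) (1 / 2 : k) • (h2 - h1)
  · rw [codisjoint_iff, Submodule.eq_top_iff']
    intro x
    refine Submodule.mem_sup.2 ⟨(1 / 2 : k) • (x + E x), ?_, (1 / 2 : k) • (x - E x), ?_, by module⟩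
    · rw [mem_eigenspaceOf, hE.map_smul, hE.map_add, hi]
      module
    · rw [mem_eigenspaceOf, hE.map_smul, hE.map_sub, hi]
      module

end

/-- A finite-dimensional symplectic Lie-Yamaguti algebra `(g, ω)` admits a
paracomplex structure `E` making `(g, ω, E)` para-Kähler if and only if `g` decomposes as a
direct sum of two isotropic subalgebras. -/
theorem statement10 {k g : Type*} [Field k] [CharZero k] [AddCommGroup g] [Module k g]
    [FiniteDimensional k g] [Nontrivial g]
    (b : g → g → g) (t : g → g → g → g) (hg : IsLieYamaguti k b t)
    (ω : g → g → k) (hω : IsSymplectic k b t ω) :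
    (∃ E : g → g, IsParacomplex k b t E ∧ ∀ x y, ω (E x) (E y) = -ω x y) ↔
    (∃ p q : Submodule k g,
      (∀ x ∈ p, ∀ y ∈ p, b x y ∈ p) ∧ (∀ x ∈ p, ∀ y ∈ p, ∀ z ∈ p, t x y z ∈ p) ∧
      (∀ x ∈ q, ∀ y ∈ q, b x y ∈ q) ∧ (∀ x ∈ q, ∀ y ∈ q, ∀ z ∈ q, t x y z ∈ q) ∧
      (∀ x ∈ p, ∀ y ∈ p, ω x y = 0) ∧ (∀ x ∈ q, ∀ y ∈ q, ω x y = 0) ∧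
      IsCompl p q) := by
  have bn1 : ∀ x y, b (-x) y = -b x y := fun x y => by
    simpa using hg.bilin.smul₁ (-1) x y
  have bn2 : ∀ x y, b x (-y) = -b x y := fun x y => by
    simpa using hg.bilin.smul₂ (-1) x y
  have tn1 : ∀ x y z, t (-x) y z = -t x y z := fun x y z => by
    simpa using hg.trilin.smul₁ (-1) x y z
  have tn2 : ∀ x y z, t x (-y) z = -t x y z := fun x y z => by
    simpa using hg.trilin.smul₂ (-1) x y z
  have tn3 : ∀ x y z, t x y (-z) = -t x y z := fun x y z => by
    simpa using hg.trilin.smul₃ (-1) x y z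
  have wn1 : ∀ x y, ω (-x) y = -ω x y := fun x y => by
    simpa using hω.bilin.smul₁ (-1) x y
  have wn2 : ∀ x y, ω x (-y) = -ω x y := fun x y => by
    simpa using hω.bilin.smul₂ (-1) x y
  constructor
  · rintro ⟨E, ⟨hE, -⟩, hEω⟩
    have hlin := hE.lin
    refine ⟨eigenspaceOf hlin 1, eigenspaceOf hlin (-1), ?_, ?_, ?_, ?_, ?_, ?_,
      isCompl_eigenspaceOf hlin hE.invol⟩
    all_goals simp only [mem_eigenspaceOf, one_smul, neg_smul]
    · intro x hx y hy
      have h := hE.integ_b x y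
      rw [hx, hy] at h
      linear_combination (norm := module) (-1 / 2 : k) • h
    · intro x hx y hy z hz
      have h := hE.integ_t x y z
      rw [hx, hy, hz] at h
      linear_combination (norm := module) (-1 / 4 : k) • h
    · intro x hx y hy
      have h := hE.integ_b x y
      rw [hx, hy] at h
      simp only [bn1, bn2, hlin.map_neg] at h
      linear_combination (norm := module) (1 / 2 : k) • h
    · intro x hx y hy z hz
      have h := hE.integ_t x y z
      rw [hx, hy, hz] at h
      simp only [tn1, tn2, tn3, hlin.map_neg] at h
      linear_combination (norm := module) (-1 / 4 : k) • h
    · intro x hx y hy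
      have h := hEω x y
      rw [hx, hy] at h
      linear_combination (1 / 2 : k) * h
    · intro x hx y hy
      have h := hEω x y
      rw [hx, hy, wn1, wn2] at h
      linear_combination (1 / 2 : k) * h
  · rintro ⟨p, q, hpb, hpt, hqb, hqt, hpω, hqω, hc⟩
    obtain ⟨E, hEp, hEq⟩ := exists_involution hc
    have hdec : ∀ x, ∃ u ∈ p, ∃ v ∈ q, u + v = x := fun x =>
      Submodule.mem_sup.1 (hc.sup_eq_top ▸ Submodule.mem_top : x ∈ p ⊔ q)
    have hEω : ∀ x y, ω (E x) (E y) = -ω x y := by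
      intro x y
      obtain ⟨x₁, hx₁, x₂, hx₂, rfl⟩ := hdec x
      obtain ⟨y₁, hy₁, y₂, hy₂, rfl⟩ := hdec y
      simp only [map_add, hEp x₁ hx₁, hEq x₂ hx₂, hEp y₁ hy₁, hEq y₂ hy₂, hω.bilin.add₁,
        hω.bilin.add₂, wn1, wn2, hpω x₁ hx₁ y₁ hy₁, hqω x₂ hx₂ y₂ hy₂]
      ring
    -- An isometry for `ω` that is also an anti-isometry would force `ω = 0`.
    have hne : ¬ ∀ x y, ω (E x) (E y) = ω x y := by
      intro h
      obtain ⟨x, hx⟩ := exists_ne (0 : g)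
      refine hx (hω.nondeg x fun y => ?_)
      linear_combination (1 / 2 : k) * (hEω x y - h x y)
    have hprod : IsProductStructure k b t E := by
      refine ⟨E.isLinear, ?_, ?_, ?_, ?_, ?_⟩
      · intro x
        obtain ⟨x₁, hx₁, x₂, hx₂, rfl⟩ := hdec x
        simp only [map_add, map_neg, hEp x₁ hx₁, hEq x₂ hx₂, neg_neg]
      · intro h
        exact hne fun x y => by rw [h]; rfl
      · intro h
        exact hne fun x y => by rw [h, wn1, wn2, neg_neg]
      · intro x y
        obtain ⟨x₁, hx₁, x₂, hx₂, rfl⟩ := hdec x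
        obtain ⟨y₁, hy₁, y₂, hy₂, rfl⟩ := hdec y
        simp only [map_add, map_neg, hEp x₁ hx₁, hEq x₂ hx₂, hEp y₁ hy₁, hEq y₂ hy₂,
          hg.bilin.add₁, hg.bilin.add₂, bn1, bn2,
          hEp _ (hpb x₁ hx₁ y₁ hy₁), hEq _ (hqb x₂ hx₂ y₂ hy₂)]
        abel
      · intro x y z
        obtain ⟨x₁, hx₁, x₂, hx₂, rfl⟩ := hdec x
        obtain ⟨y₁, hy₁, y₂, hy₂, rfl⟩ := hdec y
        obtain ⟨z₁, hz₁, z₂, hz₂, rfl⟩ := hdec z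
        simp only [map_add, map_neg, hEp x₁ hx₁, hEq x₂ hx₂, hEp y₁ hy₁, hEq y₂ hy₂,
          hEp z₁ hz₁, hEq z₂ hz₂, hg.trilin.add₁, hg.trilin.add₂, hg.trilin.add₃, tn1, tn2, tn3,
          hEp _ (hpt x₁ hx₁ y₁ hy₁ z₁ hz₁), hEq _ (hqt x₂ hx₂ y₂ hy₂ z₂ hz₂)]
        abel
    refine ⟨E, ⟨hprod, ?_⟩, hEω⟩
    have hcE := isCompl_eigenspaceOf hprod.lin hprod.invol
    have hp1 : ∀ x ∈ eigenspaceOf hprod.lin 1, ∀ y ∈ eigenspaceOf hprod.lin 1, ω x y = 0 := by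
      simp only [mem_eigenspaceOf, one_smul]
      intro x hx y hy
      have h := hEω x y
      rw [hx, hy] at h
      linear_combination (1 / 2 : k) * h
    have hq1 : ∀ x ∈ eigenspaceOf hprod.lin (-1), ∀ y ∈ eigenspaceOf hprod.lin (-1),
        ω x y = 0 := by
      simp only [mem_eigenspaceOf, neg_smul, one_smul]
      intro x hx y hy
      have h := hEω x y
      rw [hx, hy, wn1, wn2] at h
      linear_combination (1 / 2 : k) * h
    exact le_antisymm (finrank_le_of_isotropic hω.bilin hω.nondeg hp1 hcE.sup_eq_top)
      (finrank_le_of_isotropic hω.bilin hω.nondeg hq1 hcE.symm.sup_eq_top)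
end
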